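/- Let d ≥ 1, ε > 0, let y₁, …, y_{d+2} be affinely independent points in ℝ^{d+1} with y_i = (x_i, t_i) (t_i ∈ ℝ the last coordinate), barycentric coordinates λ₁, …, λ_{d+2}, and let T denote the simplex with these vertices and |T| its (d+1)-dimensional Lebesgue volume. Let D be an invertible real (d+1)×(d+1) matrix, J ∈ ℝ^{d+1} a constant vector, and u₁, …, u_{d+2} real numbers. Suppose that for every pair i ≠ j, D⁻¹J · (y_i − y_j) = B((t_i − t_j)/ε) u_i − B((t_j − t_i)/ε) u_j. Then for every index j: |T| (J · ∇λ_j) = Σ_{i ≠ j} d_{ji} [ B((t_i − t_j)/ε) u_i − B((t_j − t_i)/ε) u_j ], where d_{ji} = |T| (D∇λ_i · ∇λ_j) = ∫_T D∇λ_i · ∇λ_j. -/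

import Mathlib

open MeasureTheory RealInnerProductSpace

/-- The Bernoulli function `B(s) = s / (e^s - 1)` for `s ≠ 0`, with `B(0) = 1`. -/
noncomputable def bernoulliFn (s : ℝ) : ℝ :=
  if s = 0 then 1 else s / (Real.exp s - 1)

/-- The action of a matrix on vectors of Euclidean space (as a linear map). -/
noncomputable def matVec {n : ℕ} (D : Matrix (Fin n) (Fin n) ℝ)
    (v : EuclideanSpace ℝ (Fin n)) : EuclideanSpace ℝ (Fin n) :=
  (WithLp.equiv 2 (Fin n → ℝ)).symm (D.mulVec (WithLp.equiv 2 (Fin n → ℝ) v))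

/-- A vector is recovered from its inner products with the edges `y i - y j` of a nondegenerate
simplex and the gradients `g i` of the barycentric coordinates. -/
theorem sum_inner_edge_smul_gradient {ι V : Type*} [Fintype ι] [DecidableEq ι]
    [NormedAddCommGroup V] [InnerProductSpace ℝ V] {y g : ι → V}
    (hspan : vectorSpan ℝ (Set.range y) = ⊤) (j : ι)
    (hg : ∀ i k, ⟪g i, y k - y j⟫ = (if i = k then (1 : ℝ) else 0) - if i = j then 1 else 0)
    (w : V) : ∑ i, ⟪w, y i - y j⟫ • g i = w := by
  refine ext_inner_right ℝ fun v => ?_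
  have hv : v ∈ Submodule.span ℝ (Set.range fun i => y i -ᵥ y j) := by
    rw [← vectorSpan_range_eq_span_range_vsub_right, hspan]
    trivial
  induction hv using Submodule.span_induction with
  | mem x hx =>
    obtain ⟨k, rfl⟩ := hx
    simp [sum_inner, inner_smul_left, hg, mul_sub]
  | zero => simp
  | add a b _ _ ha hb => rw [inner_add_right, inner_add_right, ha, hb]
  | smul r a _ ha => rw [inner_smul_right, inner_smul_right, ha]

theorem matVec_eq_toEuclideanLin {n : ℕ} (D : Matrix (Fin n) (Fin n) ℝ)
    (v : EuclideanSpace ℝ (Fin n)) : matVec D v = Matrix.toEuclideanLin D v :=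
  rfl

theorem matVec_matVec_inv {n : ℕ} {D : Matrix (Fin n) (Fin n) ℝ} (hD : IsUnit D)
    (v : EuclideanSpace ℝ (Fin n)) : matVec D (matVec D⁻¹ v) = v := by
  simp [matVec, Matrix.mulVec_mulVec,
    Matrix.mul_nonsing_inv D ((Matrix.isUnit_iff_isUnit_det D).mp hD)]

/-- Local stiffness identity for the lowest-order space-time Scharfetter--Gummel (EAFE)
scheme: if the edge tangential components of `D⁻¹J` are the exponentially fitted fluxes
`B((t_i - t_j)/ε) u_i - B((t_j - t_i)/ε) u_j`, then
`|T| (J·∇λ_j) = Σ_{i ≠ j} d_{ji} [B((t_i - t_j)/ε) u_i - B((t_j - t_i)/ε) u_j]`,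
where `d_{ji} = |T| (D∇λ_i · ∇λ_j) = ∫_T D∇λ_i · ∇λ_j`. -/
theorem eafe_local_stiffness_identity (d : ℕ) (hd : 1 ≤ d) (ε : ℝ) (hε : 0 < ε)
    (y : Fin (d + 2) → EuclideanSpace ℝ (Fin (d + 1))) (hy : AffineIndependent ℝ y)
    (t : Fin (d + 2) → ℝ) (ht : ∀ i, t i = y i (Fin.last d))
    (lam : Fin (d + 2) → EuclideanSpace ℝ (Fin (d + 1)) → ℝ)
    (g : Fin (d + 2) → EuclideanSpace ℝ (Fin (d + 1))) (c : Fin (d + 2) → ℝ)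
    (hlam : ∀ i z, lam i z = c i + ⟪g i, z⟫)
    (hdelta : ∀ i j, lam i (y j) = if i = j then 1 else 0)
    (hsum : ∀ z, (∑ i, lam i z) = 1)
    (D : Matrix (Fin (d + 1)) (Fin (d + 1)) ℝ) (hD : IsUnit D)
    (J : EuclideanSpace ℝ (Fin (d + 1))) (u : Fin (d + 2) → ℝ)
    (vol : ℝ) (hvol : vol = (volume (convexHull ℝ (Set.range y))).toReal)
    (hedge : ∀ i j : Fin (d + 2), i ≠ j →
      ⟪matVec D⁻¹ J, y i - y j⟫
        = bernoulliFn ((t i - t j) / ε) * u i - bernoulliFn ((t j - t i) / ε) * u j) :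
    ∀ j : Fin (d + 2), vol * ⟪J, g j⟫
      = ∑ i ∈ Finset.univ.erase j,
          (vol * ⟪matVec D (g i), g j⟫) *
            (bernoulliFn ((t i - t j) / ε) * u i - bernoulliFn ((t j - t i) / ε) * u j) := by
  intro j
  have hspan : vectorSpan ℝ (Set.range y) = ⊤ :=
    hy.vectorSpan_eq_top_of_card_eq_finrank_add_one (by simp)
  have hg : ∀ i k, ⟪g i, y k - y j⟫ = (if i = k then (1 : ℝ) else 0) - if i = j then 1 else 0 := by
    intro i k
    rw [← hdelta i k, ← hdelta i j, hlam, hlam, inner_sub_right]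
    ring
  have hJ : ∑ i, ⟪matVec D⁻¹ J, y i - y j⟫ • matVec D (g i) = J := by
    have h := congrArg (matVec D) (sum_inner_edge_smul_gradient hspan j hg (matVec D⁻¹ J))
    rw [matVec_matVec_inv hD] at h
    simpa only [matVec_eq_toEuclideanLin, map_sum, map_smul] using h
  have hinner : ⟪J, g j⟫ =
      ∑ i, ⟪matVec D⁻¹ J, y i - y j⟫ * ⟪matVec D (g i), g j⟫ := by
    conv_lhs => rw [← hJ]
    simp only [sum_inner, real_inner_smul_left]
  rw [hinner, ← Finset.sum_erase Finset.univ (a := j) (by simp), Finset.mul_sum]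
  refine Finset.sum_congr rfl fun i hi => ?_
  rw [hedge i j (Finset.ne_of_mem_erase hi)]
  ring
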